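/- arXiv:1203.6289 — 8 statements merged into one kernel-verified Lean document; each statement's English description precedes it below -/
import Mathlib

section
/- Let N ≥ 2 be an integer and let q be a nonzero complex number. On the N-fold tensor product (ℂ²)^{⊗N} (equivalently, on complex matrices indexed by functions Fin N → Fin 2), define for 1 ≤ i ≤ N−1 the operator e_i = (q+q⁻¹)/4 · Id − (1/2)(σˣ_i σˣ_{i+1} + σʸ_i σʸ_{i+1} + ((q+q⁻¹)/2) σᶻ_i σᶻ_{i+1}) − ((q−q⁻¹)/4)(σᶻ_i − σᶻ_{i+1}), where σᵃ_j denotes the Pauli matrix σᵃ acting on the j-th tensor factor and the identity on all other factors. Then these operators satisfy the Temperley–Lieb relations: (i) e_i² = (q+q⁻¹) e_i for all 1 ≤ i ≤ N−1; (ii) e_i e_{i+1} e_i = e_i and e_{i+1} e_i e_{i+1} = e_{i+1} for all 1 ≤ i ≤ N−2; (iii) e_i e_j = e_j e_i whenever |i−j| ≥ 2. -/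
open Matrix

/-- Pauli matrix σˣ. -/
noncomputable def sigmaX : Matrix (Fin 2) (Fin 2) ℂ := !![0, 1; 1, 0]

/-- Pauli matrix σʸ. -/
noncomputable def sigmaY : Matrix (Fin 2) (Fin 2) ℂ := !![0, -Complex.I; Complex.I, 0]

/-- Pauli matrix σᶻ. -/
noncomputable def sigmaZ : Matrix (Fin 2) (Fin 2) ℂ := !![1, 0; 0, -1]

/-- The operator acting as the 2×2 matrix `σ` on the `j`-th tensor factor of `(ℂ²)^{⊗N}`
and as the identity on all other factors. -/
noncomputable def pauliAt (N : ℕ) (σ : Matrix (Fin 2) (Fin 2) ℂ) (j : Fin N) :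
    Matrix (Fin N → Fin 2) (Fin N → Fin 2) ℂ :=
  Matrix.of fun f g =>
    σ (f j) (g j) * ∏ k ∈ Finset.univ.erase j, (if f k = g k then (1 : ℂ) else 0)

/-- The Temperley–Lieb density built from sites `a` and `b` of the XXZ spin chain. -/
noncomputable def TLdensity (N : ℕ) (q : ℂ) (a b : Fin N) :
    Matrix (Fin N → Fin 2) (Fin N → Fin 2) ℂ :=
  ((q + q⁻¹) / 4) • (1 : Matrix (Fin N → Fin 2) (Fin N → Fin 2) ℂ)
    - (1 / 2 : ℂ) • (pauliAt N sigmaX a * pauliAt N sigmaX b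
        + pauliAt N sigmaY a * pauliAt N sigmaY b
        + ((q + q⁻¹) / 2) • (pauliAt N sigmaZ a * pauliAt N sigmaZ b))
    - ((q - q⁻¹) / 4) • (pauliAt N sigmaZ a - pauliAt N sigmaZ b)

/-- The XXZ representation of the Temperley–Lieb generator `e_i` (for `1 ≤ i ≤ N-1`),
acting on the `i`-th and `(i+1)`-st tensor factors (numbered from `1`). -/
noncomputable def eXXZ (N : ℕ) (q : ℂ) (i : ℕ) :
    Matrix (Fin N → Fin 2) (Fin N → Fin 2) ℂ :=
  if h : 1 ≤ i ∧ i ≤ N - 1 ∧ 2 ≤ N then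
    TLdensity N q ⟨i - 1, by omega⟩ ⟨i, by omega⟩
  else 0

theorem pauliAt_mulVec (N : ℕ) (σ : Matrix (Fin 2) (Fin 2) ℂ) (j : Fin N)
    (v : (Fin N → Fin 2) → ℂ) (f : Fin N → Fin 2) :
    (pauliAt N σ j *ᵥ v) f = ∑ s, σ (f j) s * v (Function.update f j s) := by
  simp only [Matrix.mulVec, dotProduct, pauliAt, Matrix.of_apply]
  symm
  refine Finset.sum_of_injOn (fun s => Function.update f j s) ?_ ?_ ?_ ?_
  · intro s _ t _ h
    exact Function.update_injective f j h
  · intro s _; simp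
  · intro g _ hg
    have : ∃ k, k ≠ j ∧ f k ≠ g k := by
      by_contra hc
      push Not at hc
      apply hg
      refine ⟨g j, by simp, ?_⟩
      funext k
      by_cases hk : k = j
      · subst hk; simp
      · simp [hk, hc k hk]
    obtain ⟨k, hk, hfg⟩ := this
    rw [Finset.prod_eq_zero (i := k)]
    · simp
    · simp [hk]
    · simp [hfg]
  · intro s _
    rw [Finset.prod_eq_one]
    · simp
    · intro k hk
      have : k ≠ j := by simpa using hk
      simp [this]

theorem TLdensity_mulVec (N : ℕ) (q : ℂ) (hq : q ≠ 0) (a b : Fin N) (hab : a ≠ b)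
    (v : (Fin N → Fin 2) → ℂ) (f : Fin N → Fin 2) :
    (TLdensity N q a b *ᵥ v) f = if f a = f b then 0 else
      (if f a = 0 then q⁻¹ else q) * v f - v (f ∘ Equiv.swap a b) := by
  have hba := hab.symm
  have key : ∀ s t, f a = s → f b = t →
      f ∘ Equiv.swap a b = Function.update (Function.update f a t) b s := by
    intro s t hs ht
    funext k
    simp only [Function.comp, Equiv.swap_apply_def, Function.update_apply]
    split_ifs <;> simp_all
  have id1 : Function.update (Function.update f a (f a)) b (f b) = f := by simp
  rw [key _ _ rfl rfl]
  simp only [TLdensity, Matrix.sub_mulVec, Matrix.add_mulVec, Matrix.smul_mulVec,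
    ← Matrix.mulVec_mulVec, Matrix.one_mulVec, Pi.sub_apply, Pi.add_apply, Pi.smul_apply,
    pauliAt_mulVec, Fin.sum_univ_two, sigmaX, sigmaY, sigmaZ, smul_eq_mul,
    Function.update_of_ne hba]
  have e1 : Function.update f a (f a) = f := by simp
  have e2 : Function.update f b (f b) = f := by simp
  have hI := Complex.I_mul_I
  generalize f a = s at *
  generalize f b = t at *
  fin_cases s <;> fin_cases t <;>
    simp only [Fin.zero_eta, Fin.mk_one, Fin.isValue] at e1 e2 id1 <;> simp <;>
    simp only [e1, e2, id1] <;> field_simp <;> (try simp only [Complex.I_sq]) <;> ring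

theorem mat_ext {N : ℕ} {A B : Matrix (Fin N → Fin 2) (Fin N → Fin 2) ℂ}
    (h : ∀ v f, (A *ᵥ v) f = (B *ᵥ v) f) : A = B := by
  apply Matrix.toLin'.injective
  apply LinearMap.ext
  intro v
  funext f
  simpa using h v f

theorem swap_comp_swap {N : ℕ} (a b : Fin N) (f : Fin N → Fin 2) :
    (f ∘ Equiv.swap a b) ∘ Equiv.swap a b = f := by
  funext k; simp

theorem TL_sq (N : ℕ) (q : ℂ) (hq : q ≠ 0) (a b : Fin N) (hab : a ≠ b) :
    TLdensity N q a b * TLdensity N q a b = (q + q⁻¹) • TLdensity N q a b := by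
  apply mat_ext
  intro v f
  simp only [← Matrix.mulVec_mulVec, Matrix.smul_mulVec, Pi.smul_apply,
    TLdensity_mulVec N q hq a b hab, swap_comp_swap, smul_eq_mul, Function.comp_apply,
    Equiv.swap_apply_left, Equiv.swap_apply_right]
  generalize f a = s
  generalize f b = t
  fin_cases s <;> fin_cases t <;> simp <;> field_simp <;> ring

theorem TL_braid (N : ℕ) (q : ℂ) (hq : q ≠ 0) (a b c : Fin N) (hab : a ≠ b) (hbc : b ≠ c)
    (hac : a ≠ c) :
    TLdensity N q a b * TLdensity N q b c * TLdensity N q a b = TLdensity N q a b ∧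
    TLdensity N q b c * TLdensity N q a b * TLdensity N q b c = TLdensity N q b c := by
  constructor <;>
  · apply mat_ext
    intro v f
    simp only [← Matrix.mulVec_mulVec,
      TLdensity_mulVec N q hq a b hab, TLdensity_mulVec N q hq b c hbc,
      swap_comp_swap, Function.comp_apply,
      Equiv.swap_apply_left, Equiv.swap_apply_right,
      Equiv.swap_apply_of_ne_of_ne hac hab, Equiv.swap_apply_of_ne_of_ne hab hac,
      Equiv.swap_apply_of_ne_of_ne hac.symm hbc.symm]
    generalize f a = s
    generalize f b = t
    generalize f c = u
    fin_cases s <;> fin_cases t <;> fin_cases u <;> simp <;> field_simp <;> ring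

theorem TL_comm (N : ℕ) (q : ℂ) (hq : q ≠ 0) (a b c d : Fin N) (hab : a ≠ b) (hcd : c ≠ d)
    (hac : a ≠ c) (had : a ≠ d) (hbc : b ≠ c) (hbd : b ≠ d) :
    TLdensity N q a b * TLdensity N q c d = TLdensity N q c d * TLdensity N q a b := by
  apply mat_ext
  intro v f
  have hs : (f ∘ Equiv.swap a b) ∘ Equiv.swap c d = (f ∘ Equiv.swap c d) ∘ Equiv.swap a b := by
    funext k
    simp only [Function.comp, Equiv.swap_apply_def]
    grind
  simp only [← Matrix.mulVec_mulVec,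
    TLdensity_mulVec N q hq a b hab, TLdensity_mulVec N q hq c d hcd,
    Function.comp_apply, hs,
    Equiv.swap_apply_of_ne_of_ne hac had, Equiv.swap_apply_of_ne_of_ne hbc hbd,
    Equiv.swap_apply_of_ne_of_ne hac.symm hbc.symm,
    Equiv.swap_apply_of_ne_of_ne had.symm hbd.symm]
  split_ifs <;> ring

/-- The XXZ spin-chain operators `e_i` satisfy the defining relations of the
Temperley–Lieb algebra `TL_q(N)` with loop fugacity `δ = q + q⁻¹`. -/
theorem xxz_satisfies_temperley_lieb_relations (N : ℕ) (hN : 2 ≤ N) (q : ℂ) (hq : q ≠ 0) :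
    (∀ i, 1 ≤ i → i ≤ N - 1 →
      eXXZ N q i * eXXZ N q i = (q + q⁻¹) • eXXZ N q i) ∧
    (∀ i, 1 ≤ i → i ≤ N - 2 →
      eXXZ N q i * eXXZ N q (i + 1) * eXXZ N q i = eXXZ N q i ∧
      eXXZ N q (i + 1) * eXXZ N q i * eXXZ N q (i + 1) = eXXZ N q (i + 1)) ∧
    (∀ i j, 1 ≤ i → i ≤ N - 1 → 1 ≤ j → j ≤ N - 1 → 2 ≤ |(i : ℤ) - (j : ℤ)| →
      eXXZ N q i * eXXZ N q j = eXXZ N q j * eXXZ N q i) := by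
  have hE : ∀ i (h : 1 ≤ i ∧ i ≤ N - 1 ∧ 2 ≤ N), eXXZ N q i =
      TLdensity N q ⟨i - 1, by omega⟩ ⟨i, by omega⟩ := fun i h => by
    unfold eXXZ; rw [dif_pos h]
  refine ⟨?_, ?_, ?_⟩
  · intro i h1 h2
    rw [hE i ⟨h1, h2, hN⟩]
    apply TL_sq N q hq
    simp only [ne_eq, Fin.mk.injEq]; omega
  · intro i h1 h2
    rw [hE i ⟨h1, by omega, hN⟩, hE (i + 1) ⟨by omega, by omega, hN⟩]
    exact TL_braid N q hq ⟨i - 1, by omega⟩ ⟨i, by omega⟩ ⟨i + 1, by omega⟩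
      (by simp only [ne_eq, Fin.mk.injEq]; omega) (by simp only [ne_eq, Fin.mk.injEq]; omega)
      (by simp only [ne_eq, Fin.mk.injEq]; omega)
  · intro i j h1 h2 h3 h4 h5
    rw [hE i ⟨h1, h2, hN⟩, hE j ⟨h3, h4, hN⟩]
    rw [le_abs] at h5
    apply TL_comm N q hq <;> simp only [ne_eq, Fin.mk.injEq] <;> omega
end

section
/- Let δ be a complex number with δ² ≠ 1 and δ² ≠ 2, and let E₁(δ), E₂(δ), E₃(δ) be the 6×6 complex matrices whose only nonzero entries (row, column) are: E₁: (3,2)=1, (3,3)=δ, (5,4)=1, (5,5)=δ, (5,6)=1; E₂: (2,1)=1, (2,2)=δ, (2,3)=1, (2,4)=1, (6,5)=1, (6,6)=δ; E₃: (4,2)=1, (4,4)=δ, (5,3)=1, (5,5)=δ, (5,6)=1. Then the vector v(δ) = (1, −δ/(δ²−2), 1/(δ²−2), 1/(δ²−2), −δ/((δ²−2)(δ²−1)), 1/((δ²−2)(δ²−1))) satisfies E_i(δ) v(δ) = 0 for i = 1,2,3, and v(δ) is the unique vector in ℂ⁶ with first coordinate equal to 1 that is annihilated by all three matrices E₁(δ),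 E₂(δ), E₃(δ). -/
open Matrix

/-- The Temperley–Lieb generator `e₁` of `TL_q(4)` acting on the six-dimensional induced
module `W₁[2] ×_f W₁[2]` in the basis `(l, e₂l, e₁e₂l, e₃e₂l, e₁e₃e₂l, e₂e₁e₃e₂l)`. -/
noncomputable def fusE1 (δ : ℂ) : Matrix (Fin 6) (Fin 6) ℂ :=
  !![0, 0, 0, 0, 0, 0;
     0, 0, 0, 0, 0, 0;
     0, 1, δ, 0, 0, 0;
     0, 0, 0, 0, 0, 0;
     0, 0, 0, 1, δ, 1;
     0, 0, 0, 0, 0, 0]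

/-- The Temperley–Lieb generator `e₂` on the fusion module `W₁[2] ×_f W₁[2]`. -/
noncomputable def fusE2 (δ : ℂ) : Matrix (Fin 6) (Fin 6) ℂ :=
  !![0, 0, 0, 0, 0, 0;
     1, δ, 1, 1, 0, 0;
     0, 0, 0, 0, 0, 0;
     0, 0, 0, 0, 0, 0;
     0, 0, 0, 0, 0, 0;
     0, 0, 0, 0, 1, δ]

/-- The Temperley–Lieb generator `e₃` on the fusion module `W₁[2] ×_f W₁[2]`. -/
noncomputable def fusE3 (δ : ℂ) : Matrix (Fin 6) (Fin 6) ℂ :=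
  !![0, 0, 0, 0, 0, 0;
     0, 0, 0, 0, 0, 0;
     0, 0, 0, 0, 0, 0;
     0, 1, 0, δ, 0, 0;
     0, 0, 1, 0, δ, 1;
     0, 0, 0, 0, 0, 0]

/-- The invariant vector `inv(δ)` spanning the one-dimensional summand `W₂[4]` of the
generic fusion `W₁[2] ×_f W₁[2]`. -/
noncomputable def fusInv (δ : ℂ) : Fin 6 → ℂ :=
  ![1, -δ / (δ ^ 2 - 2), 1 / (δ ^ 2 - 2), 1 / (δ ^ 2 - 2),
    -δ / ((δ ^ 2 - 2) * (δ ^ 2 - 1)), 1 / ((δ ^ 2 - 2) * (δ ^ 2 - 1))]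

/-- For generic `δ` (namely `δ² ≠ 1` and `δ² ≠ 2`), the vector `inv(δ)` is annihilated
by `e₁, e₂, e₃` and is the unique such vector with first coordinate `1`. -/
theorem fusion_invariant_exists_unique (δ : ℂ) (h1 : δ ^ 2 ≠ 1) (h2 : δ ^ 2 ≠ 2) :
    (fusE1 δ).mulVec (fusInv δ) = 0 ∧
    (fusE2 δ).mulVec (fusInv δ) = 0 ∧
    (fusE3 δ).mulVec (fusInv δ) = 0 ∧
    (∀ w : Fin 6 → ℂ, w 0 = 1 →
      (fusE1 δ).mulVec w = 0 → (fusE2 δ).mulVec w = 0 → (fusE3 δ).mulVec w = 0 →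
      w = fusInv δ) := by
  have ha : δ ^ 2 - 2 ≠ 0 := sub_ne_zero.mpr h2
  have hb : δ ^ 2 - 1 ≠ 0 := sub_ne_zero.mpr h1
  refine ⟨?_, ?_, ?_, ?_⟩
  · ext i
    fin_cases i <;>
      simp [fusE1, fusInv, Matrix.mulVec, dotProduct, Fin.sum_univ_succ] <;>
      field_simp <;> ring
  · ext i
    fin_cases i <;>
      simp [fusE2, fusInv, Matrix.mulVec, dotProduct, Fin.sum_univ_succ] <;>
      field_simp <;> ring
  · ext i
    fin_cases i <;>
      simp [fusE3, fusInv, Matrix.mulVec, dotProduct, Fin.sum_univ_succ] <;>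
      field_simp <;> ring
  · intro w h0 e1 e2 e3
    have a1 : w 1 + δ * w 2 = 0 := by
      simpa [fusE1, Matrix.mulVec, dotProduct, Fin.sum_univ_six] using congrFun e1 2
    have a2 : w 3 + δ * w 4 + w 5 = 0 := by
      simpa [fusE1, Matrix.mulVec, dotProduct, Fin.sum_univ_six] using congrFun e1 4
    have a3 : w 0 + δ * w 1 + w 2 + w 3 = 0 := by
      simpa [fusE2, Matrix.mulVec, dotProduct, Fin.sum_univ_six] using congrFun e2 1
    have a4 : w 4 + δ * w 5 = 0 := by
      simpa [fusE2, Matrix.mulVec, dotProduct, Fin.sum_univ_six] using congrFun e2 5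
    have a5 : w 2 + δ * w 4 + w 5 = 0 := by
      simpa [fusE3, Matrix.mulVec, dotProduct, Fin.sum_univ_six] using congrFun e3 4
    have c2 : w 2 = 1 / (δ ^ 2 - 2) := by
      rw [eq_div_iff ha]
      linear_combination δ * a1 - a3 + h0 + a2 - a5
    have c3 : w 3 = 1 / (δ ^ 2 - 2) := by
      rw [← c2]
      linear_combination a2 - a5
    have c1 : w 1 = -δ / (δ ^ 2 - 2) := by
      have : w 1 = -δ * w 2 := by linear_combination a1
      rw [this, c2]
      ring
    have c5 : w 5 = 1 / ((δ ^ 2 - 2) * (δ ^ 2 - 1)) := by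
      rw [← div_div, ← c2, eq_div_iff hb]
      linear_combination δ * a4 - a5
    have c4 : w 4 = -δ / ((δ ^ 2 - 2) * (δ ^ 2 - 1)) := by
      have : w 4 = -δ * w 5 := by linear_combination a4
      rw [this, c5]
      ring
    ext i
    fin_cases i
    · exact h0
    · exact c1
    · exact c2
    · exact c3
    · exact c4
    · exact c5
end

section
/- Let δ be a complex number with δ² = 1 or δ² = 2, and let E₁(δ), E₂(δ), E₃(δ) be the 6×6 complex matrices whose only nonzero entries (row, column) are: E₁: (3,2)=1, (3,3)=δ, (5,4)=1, (5,5)=δ, (5,6)=1; E₂: (2,1)=1, (2,2)=δ, (2,3)=1, (2,4)=1, (6,5)=1, (6,6)=δ; E₃: (4,2)=1, (4,4)=δ, (5,3)=1, (5,5)=δ, (5,6)=1. Then there exists NO vector v ∈ ℂ⁶ with first coordinate equal to 1 such that E_i(δ) v = 0 for all i = 1,2,3. -/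
open Matrix

/-- At the degenerate points `δ² = 1` (percolation) or `δ² = 2` (Ising), there is no
vector with first coordinate `1` annihilated by all three Temperley–Lieb generators on
the fusion module `W₁[2] ×_f W₁[2]`. -/
theorem fusion_invariant_no_solution (δ : ℂ) (h : δ ^ 2 = 1 ∨ δ ^ 2 = 2) :
    ¬ ∃ w : Fin 6 → ℂ, w 0 = 1 ∧
      (fusE1 δ).mulVec w = 0 ∧ (fusE2 δ).mulVec w = 0 ∧ (fusE3 δ).mulVec w = 0 := by
  rintro ⟨w, h0, h1, h2, h3⟩
  have a1 := congrFun h1 2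
  have a2 := congrFun h1 4
  have a3 := congrFun h2 1
  have a4 := congrFun h2 5
  have a6 := congrFun h3 4
  simp [fusE1, fusE2, fusE3, Matrix.mulVec, dotProduct, Fin.sum_univ_six] at a1 a2 a3 a4 a6
  rw [h0] at a3
  have hk : 1 + (2 - δ ^ 2) * w 2 = 0 := by
    linear_combination a3 - δ * a1 - a2 + a6
  rcases h with h | h
  · have hc : w 2 = 0 := by
      linear_combination a6 - δ * a4 + w 5 * h
    rw [hc] at hk
    simp at hk
  · rw [h] at hk
    simp at hk
end

section
/- Let H be the 6×6 real matrix H = −[[0,0,0,0,0,0],[1,1,1,1,0,0],[0,1,1,0,0,0],[0,1,0,1,0,0],[0,0,1,1,2,2],[0,0,0,0,1,1]]. Then H is similar over ℝ (i.e. there exists an invertible real 6×6 matrix P with P⁻¹HP equal) to the block-diagonal matrix diag(−3, J, −1, −1−√2, −1+√2), where J = [[0,1],[0,0]] is a 2×2 Jordan block with eigenvalue 0. In particular H is not diagonalizable and has a single Jordan block of size 2 at eigenvalue 0. -/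
open Matrix

/-- The Hamiltonian `H = −(e₁+e₂+e₃)` of the percolation Temperley–Lieb chain (`δ = 1`)
on the fusion module `W₁[2] ×_f W₁[2]` is similar over `ℝ` to the block-diagonal matrix
`diag(−3, J, −1, −1−√2, −1+√2)` with `J` a 2×2 Jordan block at eigenvalue `0`. -/
theorem percolation_hamiltonian_jordan_form :
    let H : Matrix (Fin 6) (Fin 6) ℝ :=
      -(!![0, 0, 0, 0, 0, 0;
           1, 1, 1, 1, 0, 0;
           0, 1, 1, 0, 0, 0;
           0, 1, 0, 1, 0, 0;
           0, 0, 1, 1, 2, 2;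
           0, 0, 0, 0, 1, 1])
    let D : Matrix (Fin 6) (Fin 6) ℝ :=
      !![-3, 0, 0, 0, 0, 0;
         0, 0, 1, 0, 0, 0;
         0, 0, 0, 0, 0, 0;
         0, 0, 0, -1, 0, 0;
         0, 0, 0, 0, -1 - Real.sqrt 2, 0;
         0, 0, 0, 0, 0, -1 + Real.sqrt 2]
    ∃ P : Matrix (Fin 6) (Fin 6) ℝ, IsUnit P.det ∧ P⁻¹ * H * P = D := by
  intro H D
  obtain ⟨t, ht⟩ : ∃ t, t = Real.sqrt 2 := ⟨_, rfl⟩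
  have h2 : t * t = 2 := by rw [ht]; exact Real.mul_self_sqrt (by norm_num)
  let P : Matrix (Fin 6) (Fin 6) ℝ :=
    !![0, 0, 3, 0, 0, 0;
       0, 0, 3, 0, t, -t;
       0, 0, -3, 1, 1, 1;
       0, 0, -3, -1, 1, 1;
       2, 2, 2, 0, -2, -2;
       1, -2, 0, 0, -t, t]
  let Q : Matrix (Fin 6) (Fin 6) ℝ :=
    !![1/9, 1/3, 1/3, 1/3, 1/3, 1/3;
       5/9, -1/3, 1/6, 1/6, 1/6, -1/3;
       1/3, 0, 0, 0, 0, 0;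
       0, 0, 1/2, -1/2, 0, 0;
       1/2 - t/4, t/4, 1/4, 1/4, 0, 0;
       1/2 + t/4, -t/4, 1/4, 1/4, 0, 0]
  have hPQ : P * Q = 1 := by
    ext i j
    fin_cases i <;> fin_cases j <;>
      simp [P, Q, Matrix.mul_apply, Fin.sum_univ_succ] <;> linarith [h2]
  have hu : IsUnit P.det := by
    have h := congrArg Matrix.det hPQ
    rw [Matrix.det_mul, Matrix.det_one] at h
    exact IsUnit.of_mul_eq_one _ h
  have hHP : H * P = P * D := by
    ext i j
    fin_cases i <;> fin_cases j <;>
      simp [P, H, D, ← ht, Matrix.mul_apply, Fin.sum_univ_succ] <;> linarith [h2]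
  refine ⟨P, hu, ?_⟩
  rw [Matrix.mul_assoc, hHP, ← Matrix.mul_assoc, Matrix.nonsing_inv_mul _ hu, Matrix.one_mul]
end

section
/- Let H be the 6×6 real matrix H = −[[0,0,0,0,0,0],[1,√2,1,1,0,0],[0,1,√2,0,0,0],[0,1,0,√2,0,0],[0,0,1,1,2√2,2],[0,0,0,0,1,√2]]. Then H is similar over ℝ to the block-diagonal matrix diag(−2√2, −√2, J, −(3+√5)/√2, (√10 − 3√2)/2), where J = [[0,1],[0,0]] is a 2×2 Jordan block with eigenvalue 0. In particular H is not diagonalizable and has a single Jordan block of size 2 at eigenvalue 0. -/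
open Matrix

set_option maxHeartbeats 4000000 in
theorem aux_HP (s t : ℝ) (h2 : s * s = 2) (h5 : t * t = 5) :
    -(!![0, 0, 0, 0, 0, 0;
           1, s, 1, 1, 0, 0;
           0, 1, s, 0, 0, 0;
           0, 1, 0, s, 0, 0;
           0, 0, 1, 1, 2 * s, 2;
           0, 0, 0, 0, 1, s]) * (!![0, 0, 0, -2 * s, 0, 0;
       s, 0, s, 0, 0, 0;
       1, 1, -1, s / 2, 0, 0;
       1, -1, -1, s / 2, 0, 0;
       -s, 0, s, -3, s * (1 + t) / 2, s * (1 - t) / 2;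
       -1, 0, -1, 2 * s, 1, 1] : Matrix (Fin 6) (Fin 6) ℝ) =
    (!![0, 0, 0, -2 * s, 0, 0;
       s, 0, s, 0, 0, 0;
       1, 1, -1, s / 2, 0, 0;
       1, -1, -1, s / 2, 0, 0;
       -s, 0, s, -3, s * (1 + t) / 2, s * (1 - t) / 2;
       -1, 0, -1, 2 * s, 1, 1] : Matrix (Fin 6) (Fin 6) ℝ) * !![-2 * s, 0, 0, 0, 0, 0;
         0, -s, 0, 0, 0, 0;
         0, 0, 0, 1, 0, 0;
         0, 0, 0, 0, 0, 0;
         0, 0, 0, 0, -(3 + t) * s / 2, 0;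
         0, 0, 0, 0, 0, (s * t - 3 * s) / 2] := by
  ext i j
  fin_cases i <;> fin_cases j <;>
    simp [Matrix.mul_apply, Fin.sum_univ_succ] <;> grind

set_option maxHeartbeats 4000000 in
theorem aux_det (s t : ℝ) (h2 : s * s = 2) :
    (!![0, 0, 0, -2 * s, 0, 0;
       s, 0, s, 0, 0, 0;
       1, 1, -1, s / 2, 0, 0;
       1, -1, -1, s / 2, 0, 0;
       -s, 0, s, -3, s * (1 + t) / 2, s * (1 - t) / 2;
       -1, 0, -1, 2 * s, 1, 1] : Matrix (Fin 6) (Fin 6) ℝ).det = -16 * s * t := by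
  simp [Matrix.det_succ_row_zero, Fin.sum_univ_succ, Fin.succAbove]
  grind

/-- The Hamiltonian `H = −(e₁+e₂+e₃)` of the Ising Temperley–Lieb chain (`δ = √2`)
on the fusion module `W₁[2] ×_f W₁[2]` is similar over `ℝ` to the block-diagonal matrix
`diag(−2√2, −√2, J, −(3+√5)/√2, (√10 − 3√2)/2)` with `J` a 2×2 Jordan block at
eigenvalue `0`. -/
theorem ising_hamiltonian_jordan_form :
    let H : Matrix (Fin 6) (Fin 6) ℝ :=
      -(!![0, 0, 0, 0, 0, 0;
           1, Real.sqrt 2, 1, 1, 0, 0;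
           0, 1, Real.sqrt 2, 0, 0, 0;
           0, 1, 0, Real.sqrt 2, 0, 0;
           0, 0, 1, 1, 2 * Real.sqrt 2, 2;
           0, 0, 0, 0, 1, Real.sqrt 2])
    let D : Matrix (Fin 6) (Fin 6) ℝ :=
      !![-2 * Real.sqrt 2, 0, 0, 0, 0, 0;
         0, -Real.sqrt 2, 0, 0, 0, 0;
         0, 0, 0, 1, 0, 0;
         0, 0, 0, 0, 0, 0;
         0, 0, 0, 0, -(3 + Real.sqrt 5) / Real.sqrt 2, 0;
         0, 0, 0, 0, 0, (Real.sqrt 10 - 3 * Real.sqrt 2) / 2]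
    ∃ P : Matrix (Fin 6) (Fin 6) ℝ, IsUnit P.det ∧ P⁻¹ * H * P = D := by
  intro H D
  have h2 : Real.sqrt 2 * Real.sqrt 2 = 2 := Real.mul_self_sqrt (by norm_num)
  have h5 : Real.sqrt 5 * Real.sqrt 5 = 5 := Real.mul_self_sqrt (by norm_num)
  have h10 : Real.sqrt 10 = Real.sqrt 2 * Real.sqrt 5 := by
    rw [← Real.sqrt_mul (by norm_num)]; norm_num
  have hs : Real.sqrt 2 ≠ 0 := by positivity
  have ht : Real.sqrt 5 ≠ 0 := by positivity
  have hd : -(3 + Real.sqrt 5) / Real.sqrt 2 = -(3 + Real.sqrt 5) * Real.sqrt 2 / 2 := by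
    rw [div_eq_div_iff hs two_ne_zero]; linear_combination (3 + Real.sqrt 5) * h2
  have hD : D = !![-2 * Real.sqrt 2, 0, 0, 0, 0, 0;
         0, -Real.sqrt 2, 0, 0, 0, 0;
         0, 0, 0, 1, 0, 0;
         0, 0, 0, 0, 0, 0;
         0, 0, 0, 0, -(3 + Real.sqrt 5) * Real.sqrt 2 / 2, 0;
         0, 0, 0, 0, 0, (Real.sqrt 2 * Real.sqrt 5 - 3 * Real.sqrt 2) / 2] := by
    simp only [D, hd, h10]
  rw [hD]
  simp only [H]
  generalize Real.sqrt 2 = s at *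
  generalize Real.sqrt 5 = t at *
  let P : Matrix (Fin 6) (Fin 6) ℝ :=
    !![0, 0, 0, -2 * s, 0, 0;
       s, 0, s, 0, 0, 0;
       1, 1, -1, s / 2, 0, 0;
       1, -1, -1, s / 2, 0, 0;
       -s, 0, s, -3, s * (1 + t) / 2, s * (1 - t) / 2;
       -1, 0, -1, 2 * s, 1, 1]
  have hdet : P.det = -16 * s * t := aux_det s t h2
  have hu : IsUnit P.det := by
    rw [hdet, isUnit_iff_ne_zero]
    simp [hs, ht]
  refine ⟨P, hu, ?_⟩
  rw [Matrix.mul_assoc]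
  refine Eq.trans (congrArg (P⁻¹ * ·) ?_) (Matrix.nonsing_inv_mul_cancel_left P _ hu)
  exact aux_HP s t h2 h5
end

section
/- For real ε in a neighbourhood of 0, set p(ε) = 4 + ε, c(ε) = 1 − 6/(p(ε)(p(ε)−1)), h₃(ε) = ((p(ε) − 3(p(ε)−1))² − 1)/(4 p(ε)(p(ε)−1)), h₅(ε) = ((p(ε) − 5(p(ε)−1))² − 1)/(4 p(ε)(p(ε)−1)), and N(ε) = (1/4)·(2c(ε) + h₃(ε)·(7 + 9h₃(ε)·(4h₃(ε)(1+h₃(ε)) − 5))). Then the limit as ε → 0 (through ε ≠ 0) of N(ε)/(h₅(ε) − h₃(ε) − 2) exists and equals 35/24; consequently the logarithmic two-point coupling β̃_{1,5} = −lim_{ε→0} N(ε)/(h₅(ε) − h₃(ε) − 2) of the logarithmic Ising model equals −35/24. -/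
open Filter Topology

/-- The deformation parameter `p(ε) = 4 + ε` of the logarithmic Ising model. -/
noncomputable def pIsing (ε : ℝ) : ℝ := 4 + ε

/-- The central charge `c(ε) = 1 − 6/(p(ε)(p(ε)−1))`. -/
noncomputable def cIsing (ε : ℝ) : ℝ := 1 - 6 / (pIsing ε * (pIsing ε - 1))

/-- The Kac weight `h_{1,3}` at `p = 4 + ε`. -/
noncomputable def h3Ising (ε : ℝ) : ℝ :=
  ((pIsing ε - 3 * (pIsing ε - 1)) ^ 2 - 1) / (4 * pIsing ε * (pIsing ε - 1))

/-- The Kac weight `h_{1,5}` at `p = 4 + ε`. -/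
noncomputable def h5Ising (ε : ℝ) : ℝ :=
  ((pIsing ε - 5 * (pIsing ε - 1)) ^ 2 - 1) / (4 * pIsing ε * (pIsing ε - 1))

/-- The two-point normalization `N_{φ₂}(ε)` of the level-two descendant
`φ₂ = (L₋₂ − (3/4)L₋₁²)Φ_{1,3}`. -/
noncomputable def NIsing (ε : ℝ) : ℝ :=
  (1 / 4) * (2 * cIsing ε + h3Ising ε * (7 + 9 * h3Ising ε * (4 * h3Ising ε * (1 + h3Ising ε) - 5)))

/-- `lim_{ε→0} N(ε)/(h₅(ε) − h₃(ε) − 2) = 35/24`, hence the logarithmic two-point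
coupling `β̃_{1,5} = −lim_{ε→0} N(ε)/(h₅(ε) − h₃(ε) − 2)` of the logarithmic Ising model
equals `−35/24`. -/
theorem betaTilde_Ising :
    Tendsto (fun ε : ℝ => NIsing ε / (h5Ising ε - h3Ising ε - 2)) (𝓝[≠] 0) (𝓝 (35 / 24)) ∧
    Tendsto (fun ε : ℝ => -(NIsing ε / (h5Ising ε - h3Ising ε - 2))) (𝓝[≠] 0)
      (𝓝 (-(35 / 24))) := by
  have key : Tendsto (fun ε : ℝ => NIsing ε / (h5Ising ε - h3Ising ε - 2)) (𝓝[≠] 0)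
      (𝓝 (35 / 24)) := by
    have hc : ContinuousAt (fun ε : ℝ => ((1120)*ε^0 + (1884)*ε^1 + (1218)*ε^2 + (346)*ε^3 + (36)*ε^4) / (4 * (4 + ε)^3 * (3 + ε))) 0 := by
      apply ContinuousAt.div (by fun_prop) (by fun_prop)
      norm_num
    have ht := hc.tendsto.mono_left (nhdsWithin_le_nhds (s := {0}ᶜ))
    have hv : (35 / 24 : ℝ) = (fun ε : ℝ => ((1120)*ε^0 + (1884)*ε^1 + (1218)*ε^2 + (346)*ε^3 + (36)*ε^4) / (4 * (4 + ε)^3 * (3 + ε))) 0 := by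
      norm_num
    rw [hv]
    refine ht.congr' ?_
    have hb : ∀ᶠ ε : ℝ in 𝓝[≠] 0, ε ∈ Set.Ioo (-1 : ℝ) 1 :=
      nhdsWithin_le_nhds (Ioo_mem_nhds (by norm_num) (by norm_num))
    filter_upwards [hb, self_mem_nhdsWithin] with ε h1 h0
    have h0 : ε ≠ 0 := h0
    have h4 : (4 + ε) ≠ 0 := ne_of_gt (by linarith [h1.1])
    have h3 : (3 + ε) ≠ 0 := ne_of_gt (by linarith [h1.1])
    have hp : (4 + ε - 1) = 3 + ε := by ring
    have e3 : h3Ising ε = (2 + ε) / (4 + ε) := by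
      unfold h3Ising pIsing
      rw [hp]
      field_simp
      ring
    have e5 : h5Ising ε - h3Ising ε - 2 = ε / (4 + ε) := by
      rw [e3]
      unfold h5Ising pIsing
      rw [hp]
      field_simp
      ring
    rw [e5]
    unfold NIsing cIsing pIsing
    rw [e3, hp]
    field_simp
    ring
  exact ⟨key, key.neg⟩
end

section
/- For real ε in a neighbourhood of 0, set p(ε) = 4 + ε, c(ε) = 1 − 6/(p(ε)(p(ε)−1)), h₃(ε) = ((p(ε) − 3(p(ε)−1))² − 1)/(4 p(ε)(p(ε)−1)), h₅(ε) = ((p(ε) − 5(p(ε)−1))² − 1)/(4 p(ε)(p(ε)−1)), and G(ε) = (1/4)·(2c(ε) + h₃(ε)·(18h₃(ε) − 11)). Then the limit as ε → 0 (through ε ≠ 0) of G(ε)/(h₅(ε) − h₃(ε) − 2) exists and equals 35/24; consequently the algebraic indecomposability parameter β_{1,5} = −lim_{ε→0} G(ε)/(h₅(ε) − h₃(ε) − 2) of the logarithmic Ising model equals −35/24. -/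
open Filter Topology

/-- The Virasoro norm `G(ε) = ⟨φ₂|φ₂⟩` of the level-two descendant
`φ₂ = (L₋₂ − (3/4)L₋₁²)|ρ⟩` at central charge `c(ε)`. -/
noncomputable def GIsing (ε : ℝ) : ℝ :=
  (1 / 4) * (2 * cIsing ε + h3Ising ε * (18 * h3Ising ε - 11))

/-- `lim_{ε→0} G(ε)/(h₅(ε) − h₃(ε) − 2) = 35/24`, hence the algebraic indecomposability
parameter `β_{1,5} = −lim_{ε→0} G(ε)/(h₅(ε) − h₃(ε) − 2)` of the logarithmic Ising model
equals `−35/24`. -/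
theorem beta_Ising :
    Tendsto (fun ε : ℝ => GIsing ε / (h5Ising ε - h3Ising ε - 2)) (𝓝[≠] 0) (𝓝 (35 / 24)) ∧
    Tendsto (fun ε : ℝ => -(GIsing ε / (h5Ising ε - h3Ising ε - 2))) (𝓝[≠] 0)
      (𝓝 (-(35 / 24))) := by
  have key : Tendsto (fun ε : ℝ => GIsing ε / (h5Ising ε - h3Ising ε - 2)) (𝓝[≠] 0)
      (𝓝 (35 / 24)) := by
    have hc : ContinuousAt (fun ε : ℝ =>
        (9 * (4 + ε) ^ 2 - 23 * (4 + ε) + 18) / (4 * (4 + ε) * (3 + ε))) 0 := by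
      apply ContinuousAt.div
      · fun_prop
      · fun_prop
      · norm_num
    have ht := hc.tendsto.mono_left (nhdsWithin_le_nhds (s := {0}ᶜ))
    have hv : (9 * (4 + (0:ℝ)) ^ 2 - 23 * (4 + 0) + 18) / (4 * (4 + 0) * (3 + 0)) = 35 / 24 := by
      norm_num
    rw [hv] at ht
    refine ht.congr' ?_
    have h1 : ∀ᶠ ε : ℝ in 𝓝[≠] 0, ε ∈ Set.Ioi (-1 : ℝ) :=
      nhdsWithin_le_nhds (Ioi_mem_nhds (by norm_num))
    filter_upwards [h1, self_mem_nhdsWithin] with ε hε hne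
    have hne : ε ≠ 0 := hne
    have hε : -1 < ε := hε
    have a : 4 + ε ≠ 0 := by linarith
    have b : 3 + ε ≠ 0 := by linarith
    have e : 4 + ε - 1 = 3 + ε := by ring
    have hd : h5Ising ε - h3Ising ε - 2 = ε / (4 + ε) := by
      unfold h5Ising h3Ising pIsing
      rw [e]
      field_simp
      ring
    have hG : GIsing ε = ε * (9 * (4 + ε) ^ 2 - 23 * (4 + ε) + 18) /
        (4 * (4 + ε) ^ 2 * (3 + ε)) := by
      unfold GIsing cIsing h3Ising pIsing
      rw [e]
      field_simp
      ring
    rw [hd, hG]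
    field_simp
  exact ⟨key, key.neg⟩
end

section
/- Let p ≥ 2, 1 ≤ s₁, s₂ ≤ p and r₁, r₂ ≥ 1 be integers, and set γ₂ = (s₁ + s₂ + p + 1) mod 2. Define d_P(s) = 2p for 1 ≤ s ≤ p−1 and d_P(p) = p. Then the following identity of natural numbers holds: s₁r₁ · s₂r₂ = ∑_{r} [ ∑_{s} s·r + ∑_{s'} d_P(s')·r ], where r runs over the integers from |r₁−r₂|+1 to r₁+r₂−1 in steps of 2, s runs over the integers from |s₁−s₂|+1 to min(s₁+s₂−1, 2p−s₁−s₂−1) in steps of 2, s' runs over the integers from 2p−s₁−s₂+1 to p−γ₂ in steps of 2, and any sum whose upper bound is smaller than its lower bound is empty. -/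
lemma aux_sum (f : ℕ → ℕ) (a b n : ℕ) (h1 : b < a + 2 * n) (h2 : n = 0 ∨ a + 2 * n ≤ b + 2) :
    ∑ s ∈ (Finset.Icc a b).filter (fun s => s % 2 = a % 2), f s
      = ∑ k ∈ Finset.range n, f (a + 2 * k) := by
  symm
  apply Finset.sum_bij (fun k _ => a + 2 * k)
  · intro k hk
    simp only [Finset.mem_range, Finset.mem_filter, Finset.mem_Icc] at *
    omega
  · intro i _ j _ h
    omega
  · intro s hs
    simp only [Finset.mem_range, Finset.mem_filter, Finset.mem_Icc] at *
    exact ⟨(s - a) / 2, by omega, by omega⟩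
  · intros
    rfl

lemma aux_arith (d n : ℕ) : ∑ k ∈ Finset.range n, (d + 1 + 2 * k) = n * (n + d) := by
  induction n with
  | zero => simp
  | succ n ih => rw [Finset.sum_range_succ, ih]; ring

/-- Clebsch–Gordan type count. -/
lemma aux_cg (x y a b : ℕ) (ha : a = max x y - min x y + 1) (hb : b = x + y - 1) :
    ∑ s ∈ (Finset.Icc a b).filter (fun s => s % 2 = a % 2), s = x * y := by
  rw [aux_sum (fun s => s) a b (min x y) (by omega) (by omega), ha, aux_arith]
  rcases le_total x y with h | h
  · rw [min_eq_left h, max_eq_right h]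
    congr 1
    omega
  · rw [min_eq_right h, max_eq_left h, mul_comm]
    congr 1
    omega

lemma aux_P (p a g t : ℕ) (ht : a + t = p + 1) (hg : g = (t + 1) % 2) (hp : 1 ≤ p) :
    ∑ s ∈ (Finset.Icc a (p - g)).filter (fun s => s % 2 = a % 2),
      (if s = p then p else 2 * p) = p * t := by
  rcases Nat.even_or_odd' t with ⟨m, h | h⟩
  · rw [aux_sum _ a (p - g) m (by omega) (by omega)]
    rw [Finset.sum_congr rfl (g := fun _ => 2 * p)]
    · simp [h]; ring
    · intro k hk
      rw [Finset.mem_range] at hk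
      rw [if_neg (by omega)]
  · rw [aux_sum _ a (p - g) (m + 1) (by omega) (by omega), Finset.sum_range_succ,
      if_pos (by omega)]
    rw [Finset.sum_congr rfl (g := fun _ => 2 * p)]
    · simp [h]; ring
    · intro k hk
      rw [Finset.mem_range] at hk
      rw [if_neg (by omega)]

/-- Dimension count of the tensor product decomposition
`X_{s₁,r₁} ⊗ X_{s₂,r₂} = ⊕_r ( ⊕_s X_{s,r} ⊕ ⊕_{s'} P_{s',r} )` over Lusztig's quantum
group `U_q sl(2)` at `q = e^{iπ/p}`: with `dim X_{s,r} = s·r` and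
`dim P_{s,r} = d_P(s)·r` where `d_P(s) = 2p` for `1 ≤ s ≤ p−1` and `d_P(p) = p`,
the dimensions on both sides agree. -/
theorem tensor_product_dimension_count (p s₁ s₂ r₁ r₂ : ℕ) (hp : 2 ≤ p)
    (hs₁ : 1 ≤ s₁) (hs₁' : s₁ ≤ p) (hs₂ : 1 ≤ s₂) (hs₂' : s₂ ≤ p)
    (hr₁ : 1 ≤ r₁) (hr₂ : 1 ≤ r₂) :
    let γ₂ : ℕ := (s₁ + s₂ + p + 1) % 2
    let dP : ℕ → ℕ := fun s => if s = p then p else 2 * p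
    let ra : ℕ := max r₁ r₂ - min r₁ r₂ + 1          -- |r₁−r₂|+1
    let sa : ℕ := max s₁ s₂ - min s₁ s₂ + 1          -- |s₁−s₂|+1
    let sa' : ℕ := 2 * p - s₁ - s₂ + 1               -- 2p−s₁−s₂+1
    s₁ * r₁ * (s₂ * r₂) =
      ∑ r ∈ (Finset.Icc ra (r₁ + r₂ - 1)).filter (fun r => r % 2 = ra % 2),
        ((∑ s ∈ (Finset.Icc sa (min (s₁ + s₂ - 1) (2 * p - s₁ - s₂ - 1))).filter
            (fun s => s % 2 = sa % 2), s * r)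
          + ∑ s' ∈ (Finset.Icc sa' (p - γ₂)).filter
            (fun s' => s' % 2 = sa' % 2), dP s' * r) := by
  intro γ₂ dP ra sa sa'
  have key : (∑ s ∈ (Finset.Icc sa (min (s₁ + s₂ - 1) (2 * p - s₁ - s₂ - 1))).filter
            (fun s => s % 2 = sa % 2), s)
          + ∑ s' ∈ (Finset.Icc sa' (p - γ₂)).filter
            (fun s' => s' % 2 = sa' % 2), dP s' = s₁ * s₂ := by
    rcases le_or_gt (s₁ + s₂) p with h | h
    · rw [aux_cg s₁ s₂ sa _ rfl (by omega), Finset.Icc_eq_empty (by omega)]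
      simp
    · obtain ⟨x, hx⟩ := Nat.exists_eq_add_of_le hs₁'
      obtain ⟨y, hy⟩ := Nat.exists_eq_add_of_le hs₂'
      rw [aux_cg x y sa _ (by omega) (by omega),
        aux_P p sa' γ₂ (s₁ + s₂ - p) (by omega) (by omega) (by omega)]
      zify [h.le] at hx hy ⊢
      have e1 : (x : ℤ) = p - s₁ := by linarith
      have e2 : (y : ℤ) = p - s₂ := by linarith
      rw [e1, e2]
      ring
  simp_rw [← Finset.sum_mul, ← add_mul]
  rw [key, ← Finset.mul_sum, aux_cg r₁ r₂ ra _ rfl rfl]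
  ring
end
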